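/- Finite length property: let (x^k) be a VBPG sequence, let x̄ be an accumulation point of (x^k) (some subsequence converges to x̄), and F̄ = F(x̄). Suppose the level-set subdifferential error bound holds at x̄ with exponent γ ∈ (0,1], radius η ∈ (0,2] and level parameter ν > 0, i.e. there is c₃ > 0 with infDist(x, [F ≤ F̄])^γ ≤ c₃·‖ξ‖ for every x ∈ 𝔅(x̄;η,ν) and every ξ ∈ ∂_P F(x). Then ∑_{k=0}^∞ ‖x^{k+1} − x^k‖ < ∞ (the sequence has finite length), and the whole sequence (x^k) converges to x̄. -/

import Mathlib

open Set Metric Filter Topology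
open scoped RealInnerProductSpace

noncomputable section

variable {E : Type*} [NormedAddCommGroup E] [InnerProductSpace ℝ E] [FiniteDimensional ℝ E]

/-- The proximal subdifferential of `ψ` at `x`. -/
def proxSubdiff (ψ : E → ℝ) (x : E) : Set E :=
  {ξ | ∃ ρ > (0:ℝ), ∃ η > (0:ℝ), ∀ y, ‖y - x‖ < η →
    ψ y ≥ ψ x + ⟪ξ, y - x⟫ - ρ * ‖y - x‖ ^ 2}

/-- The Bregman distance generated by `K` (with gradient `K'`). -/
def bregD (K : E → ℝ) (K' : E → E) (x y : E) : ℝ := K y - K x - ⟪K' x, y - x⟫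

/-- The Bregman proximal mapping: the set of global minimizers of
`y ↦ ⟪∇f x, y - x⟫ + g y + D(x,y)/ε`. -/
def bregT (f' : E → E) (g : E → ℝ) (K : E → ℝ) (K' : E → E) (ε : ℝ) (x : E) : Set E :=
  {y | ∀ z, ⟪f' x, y - x⟫ + g y + bregD K K' x y / ε ≤ ⟪f' x, z - x⟫ + g z + bregD K K' x z / ε}

/-- The Bregman proximal envelope. -/
def bregEnv (f : E → ℝ) (f' : E → E) (g : E → ℝ) (K : E → ℝ) (K' : E → E) (ε : ℝ) (x : E) : ℝ :=
  ⨅ y : E, (f x + ⟪f' x, y - x⟫ + g y + bregD K K' x y / ε)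

/-
Since `f u = f x + ⟪∇f x, u - x⟫ + D_f(x, u)`, a proximal gradient step with kernel `K` and stepsize
`ε` minimizes `F u + D_Ψ(x, u)` for `Ψ = K / ε - f`: it is a proximal point step for `F` itself, and
`ε L < m` makes `D_Ψ` bounded above and below by multiples of the squared distance. With `S` the
level set `[F ≤ F̄]`, three consequences follow.
* Testing against `x k`: `F (x (k + 1)) + a ‖x (k + 1) - x k‖² ≤ F (x k)`.
* The optimality condition gives `ξ ∈ ∂_P F (x (k + 1))` with `‖ξ‖ ≤ G ‖x (k + 1) - x k‖`, so the
  error bound and `γ ≤ 1` give `dist (x (k + 1), S) ≤ C ‖x (k + 1) - x k‖` for small steps.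
* Testing the next step against almost nearest points of `S`:
  `F (x (k + 2)) - F̄ ≤ (G / 2) dist (x (k + 1), S)² ≤ A ‖x (k + 1) - x k‖²`.
Put `v k = F (x k) - F̄`. Together these bound the step `‖x (k + 1) - x k‖` by a multiple of
`√(v k) - √(v (k + 2))` as long as the iterates stay near `x̄`. This telescopes, and since `v → 0`
the remaining length is too small for the iterates to leave the ball once they come close to `x̄`.
-/

section Sequences

theorem summable_of_eventually_le_sub {u Φ : ℕ → ℝ} (hu : ∀ k, 0 ≤ u k) (hΦ : ∀ k, 0 ≤ Φ k)
    (h : ∀ᶠ k in atTop, u k ≤ Φ k - Φ (k + 1)) : Summable u := by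
  obtain ⟨N, hN⟩ := eventually_atTop.1 h
  rw [← summable_nat_add_iff N]
  refine summable_of_sum_range_le (c := Φ N) (fun k => hu (k + N)) fun n => ?_
  calc ∑ k ∈ Finset.range n, u (k + N)
      ≤ ∑ k ∈ Finset.range n, (Φ (k + N) - Φ (k + 1 + N)) := by
        refine Finset.sum_le_sum fun k _ => ?_
        rw [Nat.add_right_comm]
        exact hN (k + N) (Nat.le_add_left N k)
    _ = Φ N - Φ (n + N) := by
        rw [Finset.sum_range_sub' (fun k => Φ (k + N)), zero_add]
    _ ≤ Φ N := sub_le_self _ (hΦ _)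

variable {α : Type*} [PseudoMetricSpace α] {x : ℕ → α} {l : α}

theorem eventually_dist_lt_of_dist_le_sub {Φ : ℕ → ℝ} {η : ℝ} (hη : 0 < η)
    (hΦ : Tendsto Φ atTop (𝓝 0)) (hl : MapClusterPt l atTop x)
    (hle : ∀ k, dist (x k) (x (k + 1)) ≤ Φ k)
    (hloc : ∀ᶠ k in atTop, dist (x (k + 1)) l < η →
      dist (x k) (x (k + 1)) ≤ Φ k - Φ (k + 1)) :
    ∀ᶠ k in atTop, dist (x (k + 1)) l < η := by
  have hnext (k : ℕ) : dist (x (k + 1)) l ≤ dist (x k) (x (k + 1)) + dist (x k) l :=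
    dist_triangle_left _ _ _
  obtain ⟨N, hN, hxN, hΦN⟩ : ∃ N, (∀ k ≥ N, dist (x (k + 1)) l < η →
      dist (x k) (x (k + 1)) ≤ Φ k - Φ (k + 1)) ∧ dist (x N) l < η / 2 ∧ Φ N < η / 2 := by
    have hnear : ∃ᶠ k in atTop, dist (x k) l < η / 2 :=
      hl.frequently (Metric.ball_mem_nhds l (half_pos hη))
    exact ((hnear.and_eventually ((hΦ.eventually_lt_const (half_pos hη)).and
      (eventually_forall_ge_atTop.2 hloc))).exists).imp fun N h => ⟨h.2.2, h.1, h.2.1⟩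
  have hinv : ∀ k ≥ N, dist (x k) l + Φ k < η := by
    intro k hk
    induction k, hk using Nat.le_induction with
    | base => linarith
    | succ k hk ih => linarith [hnext k, hN k hk (by linarith [hnext k, hle k])]
  filter_upwards [eventually_ge_atTop N] with k hk
  linarith [hnext k, hle k, hinv k hk]

theorem summable_dist_and_tendsto_of_dist_le_sub {Φ : ℕ → ℝ} {η : ℝ} (hη : 0 < η)
    (hΦ : Tendsto Φ atTop (𝓝 0)) (hl : MapClusterPt l atTop x)
    (hle : ∀ k, dist (x k) (x (k + 1)) ≤ Φ k)
    (hloc : ∀ᶠ k in atTop, dist (x (k + 1)) l < η →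
      dist (x k) (x (k + 1)) ≤ Φ k - Φ (k + 1)) :
    Summable (fun k => dist (x k) (x (k + 1))) ∧ Tendsto x atTop (𝓝 l) := by
  have hsum : Summable (fun k => dist (x k) (x (k + 1))) :=
    summable_of_eventually_le_sub (fun _ => dist_nonneg) (fun k => dist_nonneg.trans (hle k))
      ((eventually_dist_lt_of_dist_le_sub hη hΦ hl hle hloc).mp hloc)
  exact ⟨hsum, le_nhds_of_cauchy_adhp (cauchySeq_of_summable_dist hsum) hl⟩

theorem mul_le_sqrt_sub_sqrt {a A d v w : ℝ} (ha : 0 ≤ a) (hA : 0 ≤ A) (hd : 0 ≤ d)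
    (hw : 0 ≤ w) (hdecr : w + a * d ^ 2 ≤ v) (hwd : w ≤ A * d ^ 2) :
    (√(a + A) - √A) * d ≤ √v - √w := by
  set c := √(a + A) - √A with hc_def
  have hc : 0 ≤ c := sub_nonneg.2 (Real.sqrt_le_sqrt (le_add_of_nonneg_left ha))
  have hca : c ^ 2 + 2 * c * √A = a := by
    rw [hc_def]
    linear_combination Real.sq_sqrt (add_nonneg ha hA) - Real.sq_sqrt hA
  have hwA : √w ≤ √A * d := by
    simpa only [Real.sqrt_mul hA, Real.sqrt_sq hd] using Real.sqrt_le_sqrt hwd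
  suffices √w + c * d ≤ √v by linarith
  apply Real.le_sqrt_of_sq_le
  calc (√w + c * d) ^ 2 = w + c ^ 2 * d ^ 2 + 2 * c * d * √w := by
        linear_combination Real.sq_sqrt hw
    _ ≤ w + c ^ 2 * d ^ 2 + 2 * c * d * (√A * d) := by gcongr
    _ = w + a * d ^ 2 := by linear_combination d ^ 2 * hca
    _ ≤ v := hdecr

theorem summable_dist_and_tendsto_of_sufficient_decrease {v : ℕ → ℝ} {a A η : ℝ}
    (ha : 0 < a) (hA : 0 ≤ A) (hη : 0 < η) (hv : Tendsto v atTop (𝓝 0))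
    (hl : MapClusterPt l atTop x)
    (hdecr : ∀ k, v (k + 1) + a * dist (x k) (x (k + 1)) ^ 2 ≤ v k)
    (hloc : ∀ᶠ k in atTop, dist (x (k + 1)) l < η →
      v (k + 2) ≤ A * dist (x k) (x (k + 1)) ^ 2) :
    Summable (fun k => dist (x k) (x (k + 1))) ∧ Tendsto x atTop (𝓝 l) := by
  have hanti : Antitone v := antitone_nat_of_succ_le fun k =>
    (le_add_of_nonneg_right (by positivity)).trans (hdecr k)
  have hv0 (k : ℕ) : 0 ≤ v k := hanti.le_of_tendsto hv k
  set c := √(a + A) - √A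
  have hc : 0 < c := sub_pos.2 (Real.sqrt_lt_sqrt hA (lt_add_of_pos_left A ha))
  have hsqrt : Tendsto (fun k => √(v k)) atTop (𝓝 0) := by simpa using hv.sqrt
  refine summable_dist_and_tendsto_of_dist_le_sub
    (Φ := fun k => (√(v k) + √(v (k + 1))) / c) hη ?_ hl (fun k => ?_) ?_
  · simpa using (hsqrt.add (hsqrt.comp (tendsto_add_atTop_nat 1))).div_const c
  · have h := mul_le_sqrt_sub_sqrt (d := dist (x k) (x (k + 1))) (v := v k) ha.le hA dist_nonneg
      le_rfl (by linarith [hdecr k, hv0 (k + 1)]) (by positivity)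
    rw [Real.sqrt_zero] at h
    rw [le_div_iff₀' hc]
    linarith [Real.sqrt_nonneg (v (k + 1))]
  · filter_upwards [hloc] with k hk hdist
    have h := mul_le_sqrt_sub_sqrt (v := v k) ha.le hA dist_nonneg (hv0 (k + 2))
      (by linarith [hdecr k, hanti (Nat.le_succ (k + 1))]) (hk hdist)
    rw [← sub_div, le_div_iff₀' hc]
    linarith

end Sequences

theorem le_rpow_inv_mul_of_rpow_le_mul {t s B γ : ℝ} (ht : 0 ≤ t) (hs : 0 ≤ s) (hs1 : s ≤ 1)
    (hB : 0 ≤ B) (hγ0 : 0 < γ) (hγ1 : γ ≤ 1) (h : t ^ γ ≤ B * s) : t ≤ B ^ γ⁻¹ * s :=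
  calc t ≤ (B * s) ^ γ⁻¹ := (Real.le_rpow_inv_iff_of_pos ht (mul_nonneg hB hs) hγ0).2 h
    _ = B ^ γ⁻¹ * s ^ γ⁻¹ := Real.mul_rpow hB hs
    _ ≤ B ^ γ⁻¹ * s := by
      gcongr
      exact Real.rpow_le_self_of_le_one hs hs1 ((one_le_inv₀ hγ0).2 hγ1)

section Bregman

variable {V : Type*} [NormedAddCommGroup V] [InnerProductSpace ℝ V]

theorem bregD_self (K : V → ℝ) (K' : V → V) (x : V) : bregD K K' x x = 0 := by
  simp [bregD]

theorem bregD_smul_sub (c : ℝ) (K f : V → ℝ) (K' f' : V → V) (x y : V) :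
    bregD (c • K - f) (c • K' - f') x y = c * bregD K K' x y - bregD f f' x y := by
  simp only [bregD, Pi.sub_apply, Pi.smul_apply, smul_eq_mul, inner_sub_left,
    real_inner_smul_left]
  ring

theorem bregD_three_point (K : V → ℝ) (K' : V → V) (x y z : V) :
    bregD K K' x z = bregD K K' x y + bregD K K' y z + ⟪K' y - K' x, z - y⟫ := by
  simp only [bregD, inner_sub_left, inner_sub_right]
  ring

theorem abs_bregD_le [CompleteSpace V] {h : V → ℝ} {h' : V → V} {C : ℝ}
    (hh : ∀ y, HasGradientAt h (h' y) y) (hlip : ∀ y z, ‖h' y - h' z‖ ≤ C * ‖y - z‖)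
    (x y : V) : |bregD h h' x y| ≤ C / 2 * ‖y - x‖ ^ 2 := by
  set d := y - x with hd
  have hline (t : ℝ) : HasDerivAt (fun t : ℝ => bregD h h' x (x + t • d))
      ⟪h' (x + t • d) - h' x, d⟫ t := by
    have hpath : HasDerivAt (fun t : ℝ => x + t • d) d t := by
      simpa using ((hasDerivAt_id t).smul_const d).const_add x
    have hlin : HasDerivAt (fun t : ℝ => ⟪h' x, x + t • d - x⟫) ⟪h' x, d⟫ t := by
      simpa [real_inner_smul_right] using (hasDerivAt_id t).mul_const ⟪h' x, d⟫
    exact ((((hh (x + t • d)).hasFDerivAt.comp_hasDerivAt t hpath).sub_const (h x)).sub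
      hlin).congr_deriv (by simp [inner_sub_left])
  have hquad (t : ℝ) :
      HasDerivAt (fun t : ℝ => C / 2 * ‖d‖ ^ 2 * t ^ 2) (C * ‖d‖ ^ 2 * t) t :=
    ((hasDerivAt_pow 2 t).const_mul (C / 2 * ‖d‖ ^ 2)).congr_deriv (by norm_num; ring)
  have hbound (t : ℝ) (ht : t ∈ Ico (0 : ℝ) 1) :
      ‖⟪h' (x + t • d) - h' x, d⟫‖ ≤ C * ‖d‖ ^ 2 * t :=
    calc ‖⟪h' (x + t • d) - h' x, d⟫‖ ≤ ‖h' (x + t • d) - h' x‖ * ‖d‖ := norm_inner_le_norm _ _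
      _ ≤ C * ‖x + t • d - x‖ * ‖d‖ := by gcongr; exact hlip _ _
      _ = C * ‖d‖ ^ 2 * t := by
        rw [add_sub_cancel_left, norm_smul, Real.norm_of_nonneg ht.1]
        ring
  have hone := image_norm_le_of_norm_deriv_right_le_deriv_boundary
    (fun t _ => (hline t).continuousAt.continuousWithinAt)
    (fun t _ => (hline t).hasDerivWithinAt) (by simp [bregD_self]) hquad hbound
    (right_mem_Icc.2 zero_le_one)
  simpa [hd] using hone

theorem mem_bregT_iff_isMinOn {f g : V → ℝ} {f' : V → V} {K : V → ℝ} {K' : V → V} {ε : ℝ}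
    {x y : V} : y ∈ bregT f' g K K' ε x ↔
      IsMinOn (fun u => (f + g) u + bregD (ε⁻¹ • K - f) (ε⁻¹ • K' - f') x u) univ y := by
  have hobj (u : V) : (f + g) u + bregD (ε⁻¹ • K - f) (ε⁻¹ • K' - f') x u =
      f x + (⟪f' x, u - x⟫ + g u + bregD K K' x u / ε) := by
    rw [bregD_smul_sub, div_eq_inv_mul, Pi.add_apply]
    simp only [bregD]
    ring
  simp only [bregT, mem_ofPred_eq, isMinOn_univ_iff, hobj, add_le_add_iff_left]

theorem sub_mem_proxSubdiff_of_isMinOn {F K : V → ℝ} {K' : V → V} {C : ℝ} {x y : V}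
    (hmin : IsMinOn (fun u => F u + bregD K K' x u) univ y)
    (hK : ∀ u, bregD K K' y u ≤ C * ‖u - y‖ ^ 2) : K' x - K' y ∈ proxSubdiff F y := by
  refine ⟨max C 1, by positivity, 1, one_pos, fun u _ => ?_⟩
  have hle : F y + bregD K K' x y ≤ F u + bregD K K' x u := hmin (mem_univ u)
  have hC : bregD K K' y u ≤ max C 1 * ‖u - y‖ ^ 2 :=
    (hK u).trans (by gcongr; exact le_max_left _ _)
  rw [bregD_three_point K K' x y u, ← neg_sub (K' x), inner_neg_left] at hle
  linarith

end Bregman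

section ProximalPoint

variable {V : Type*} [NormedAddCommGroup V] [InnerProductSpace ℝ V]

/-- The level-set subdifferential error bound for `F` at `xbar` with exponent `γ`, radius `η`,
level parameter `ν` and constant `c`. -/
def LevelSubdiffErrorBound (F : V → ℝ) (xbar : V) (γ η ν c : ℝ) : Prop :=
  ∀ y, ‖y - xbar‖ < η → F xbar < F y → F y < F xbar + ν → ∀ ξ ∈ proxSubdiff F y,
    infDist y {z | F z ≤ F xbar} ^ γ ≤ c * ‖ξ‖

/-- A Bregman proximal point sequence for `F`: each `x (k + 1)` minimizes `F` plus the Bregman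
distance from `x k` generated by a variable kernel `Ψ k`. The kernels are controlled through the
quadratic bounds on their Bregman distances that strong convexity (modulus `2 * a`) and smoothness
(constant `G`) provide; differentiability itself is not asked for. -/
structure IsBregmanProxSeq (F : V → ℝ) (Ψ : ℕ → V → ℝ) (Ψ' : ℕ → V → V) (a G : ℝ)
    (x : ℕ → V) : Prop where
  isMinOn (k : ℕ) : IsMinOn (fun u => F u + bregD (Ψ k) (Ψ' k) (x k) u) univ (x (k + 1))
  le_bregD (k : ℕ) (y z : V) : a * ‖z - y‖ ^ 2 ≤ bregD (Ψ k) (Ψ' k) y z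
  bregD_le (k : ℕ) (y z : V) : bregD (Ψ k) (Ψ' k) y z ≤ G / 2 * ‖z - y‖ ^ 2
  norm_sub_le (k : ℕ) (y z : V) : ‖Ψ' k y - Ψ' k z‖ ≤ G * ‖y - z‖

namespace IsBregmanProxSeq

variable {F : V → ℝ} {Ψ : ℕ → V → ℝ} {Ψ' : ℕ → V → V} {a G : ℝ} {x : ℕ → V} {xbar : V}

theorem apply_add_sq_le (h : IsBregmanProxSeq F Ψ Ψ' a G x) (k : ℕ) (u : V) :
    F (x (k + 1)) + a * dist (x k) (x (k + 1)) ^ 2 ≤ F u + G / 2 * dist (x k) u ^ 2 := by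
  rw [dist_eq_norm', dist_eq_norm']
  calc F (x (k + 1)) + a * ‖x (k + 1) - x k‖ ^ 2
      ≤ F (x (k + 1)) + bregD (Ψ k) (Ψ' k) (x k) (x (k + 1)) := by
        gcongr; exact h.le_bregD k _ _
    _ ≤ F u + bregD (Ψ k) (Ψ' k) (x k) u := h.isMinOn k (mem_univ u)
    _ ≤ F u + G / 2 * ‖u - x k‖ ^ 2 := by gcongr; exact h.bregD_le k _ _

theorem sufficient_decrease (h : IsBregmanProxSeq F Ψ Ψ' a G x) (k : ℕ) :
    F (x (k + 1)) + a * dist (x k) (x (k + 1)) ^ 2 ≤ F (x k) := by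
  simpa using h.apply_add_sq_le k (x k)

theorem apply_le_add_sq (h : IsBregmanProxSeq F Ψ Ψ' a G x) (ha : 0 ≤ a) (k : ℕ) (u : V) :
    F (x (k + 1)) ≤ F u + G / 2 * dist (x k) u ^ 2 :=
  (le_add_of_nonneg_right (by positivity)).trans (h.apply_add_sq_le k u)

theorem antitone (h : IsBregmanProxSeq F Ψ Ψ' a G x) (ha : 0 ≤ a) :
    Antitone fun k => F (x k) :=
  antitone_nat_of_succ_le fun k =>
    (le_add_of_nonneg_right (by positivity)).trans (h.sufficient_decrease k)

theorem exists_mem_proxSubdiff (h : IsBregmanProxSeq F Ψ Ψ' a G x) (k : ℕ) :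
    ∃ ξ ∈ proxSubdiff F (x (k + 1)), ‖ξ‖ ≤ G * dist (x k) (x (k + 1)) := by
  refine ⟨_, sub_mem_proxSubdiff_of_isMinOn (h.isMinOn k) (h.bregD_le k _), ?_⟩
  rw [dist_eq_norm]
  exact h.norm_sub_le k _ _

theorem apply_le_add_infDist_sq (h : IsBregmanProxSeq F Ψ Ψ' a G x) (ha : 0 ≤ a) (hG : 0 ≤ G)
    (k : ℕ) (z : V) :
    F (x (k + 1)) ≤ F z + G / 2 * infDist (x k) {u | F u ≤ F z} ^ 2 := by
  set S := {u | F u ≤ F z}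
  have hS : S.Nonempty := ⟨z, le_refl (F z)⟩
  have hbound : ∀ δ > infDist (x k) S, F (x (k + 1)) ≤ F z + G / 2 * δ ^ 2 := by
    intro δ hδ
    obtain ⟨u, hu, hdist⟩ := (infDist_lt_iff hS).1 hδ
    calc F (x (k + 1)) ≤ F u + G / 2 * dist (x k) u ^ 2 := h.apply_le_add_sq ha k u
      _ ≤ F z + G / 2 * δ ^ 2 := by gcongr; exact hu
  have hcont : Continuous fun δ : ℝ => F z + G / 2 * δ ^ 2 := by fun_prop
  exact ge_of_tendsto (hcont.continuousWithinAt (s := Ioi (infDist (x k) S)))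
    (eventually_mem_nhdsWithin.mono hbound)

theorem le_apply_of_mapClusterPt (h : IsBregmanProxSeq F Ψ Ψ' a G x) (ha : 0 ≤ a)
    (hF : LowerSemicontinuousAt F xbar) (hx : MapClusterPt xbar atTop x) (k : ℕ) :
    F xbar ≤ F (x k) := by
  refine le_of_forall_lt fun c hc => ?_
  obtain ⟨j, hcj, hkj⟩ :=
    ((hx.frequently (hF c hc)).and_eventually (eventually_ge_atTop k)).exists
  exact lt_of_lt_of_le hcj (h.antitone ha hkj)

/-- Lower semicontinuity controls the values only from below; the bound from above comes from
testing the minimality of `x (k + 1)` against `xbar`. -/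
theorem tendsto_apply (h : IsBregmanProxSeq F Ψ Ψ' a G x) (ha : 0 ≤ a)
    (hF : LowerSemicontinuousAt F xbar) (hx : MapClusterPt xbar atTop x) :
    Tendsto (fun k => F (x k)) atTop (𝓝 (F xbar)) := by
  refine tendsto_order.2 ⟨fun c hc => .of_forall fun k =>
    hc.trans_le (h.le_apply_of_mapClusterPt ha hF hx k), fun c hc => ?_⟩
  have hnear : ∀ᶠ y in 𝓝 xbar, F xbar + G / 2 * dist y xbar ^ 2 < c := by
    have hcont : Continuous fun y => F xbar + G / 2 * dist y xbar ^ 2 := by fun_prop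
    exact hcont.continuousAt.eventually_lt_const (by simpa using hc)
  obtain ⟨k, hk⟩ := (hx.frequently hnear).exists
  filter_upwards [eventually_ge_atTop (k + 1)] with j hj
  exact ((h.antitone ha hj).trans (h.apply_le_add_sq ha k xbar)).trans_lt hk

theorem infDist_le (h : IsBregmanProxSeq F Ψ Ψ' a G x) (hG : 0 ≤ G) {γ η ν c : ℝ}
    (hγ0 : 0 < γ) (hγ1 : γ ≤ 1) (hc : 0 ≤ c) (hEB : LevelSubdiffErrorBound F xbar γ η ν c)
    {k : ℕ} (hstep : dist (x k) (x (k + 1)) ≤ 1) (hη : dist (x (k + 1)) xbar < η)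
    (hlt : F xbar < F (x (k + 1))) (hν : F (x (k + 1)) < F xbar + ν) :
    infDist (x (k + 1)) {u | F u ≤ F xbar} ≤ (c * G) ^ γ⁻¹ * dist (x k) (x (k + 1)) := by
  obtain ⟨ξ, hξ, hξ_le⟩ := h.exists_mem_proxSubdiff k
  refine le_rpow_inv_mul_of_rpow_le_mul infDist_nonneg dist_nonneg hstep (by positivity) hγ0 hγ1 ?_
  calc infDist (x (k + 1)) {u | F u ≤ F xbar} ^ γ
      ≤ c * ‖ξ‖ := hEB _ (by rwa [← dist_eq_norm]) hlt hν ξ hξ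
    _ ≤ c * (G * dist (x k) (x (k + 1))) := by gcongr
    _ = c * G * dist (x k) (x (k + 1)) := (mul_assoc _ _ _).symm

theorem eventually_dist_le_one (h : IsBregmanProxSeq F Ψ Ψ' a G x) (ha : 0 < a)
    (hF : LowerSemicontinuousAt F xbar) (hx : MapClusterPt xbar atTop x) :
    ∀ᶠ k in atTop, dist (x k) (x (k + 1)) ≤ 1 := by
  filter_upwards [(h.tendsto_apply ha.le hF hx).eventually_lt_const (lt_add_of_pos_right _ ha)]
    with k hk
  have hsq : a * dist (x k) (x (k + 1)) ^ 2 ≤ a * 1 := by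
    linarith [h.sufficient_decrease k, h.le_apply_of_mapClusterPt ha.le hF hx (k + 1)]
  exact (sq_le_one_iff₀ dist_nonneg).1 (le_of_mul_le_mul_left hsq ha)

theorem eventually_sub_le (h : IsBregmanProxSeq F Ψ Ψ' a G x) (ha : 0 < a) (hG : 0 ≤ G)
    {γ η ν c : ℝ} (hγ0 : 0 < γ) (hγ1 : γ ≤ 1) (hν : 0 < ν) (hc : 0 ≤ c)
    (hEB : LevelSubdiffErrorBound F xbar γ η ν c)
    (hF : LowerSemicontinuousAt F xbar) (hx : MapClusterPt xbar atTop x) :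
    ∀ᶠ k in atTop, dist (x (k + 1)) xbar < η →
      F (x (k + 2)) - F xbar ≤
        G / 2 * ((c * G) ^ γ⁻¹) ^ 2 * dist (x k) (x (k + 1)) ^ 2 := by
  filter_upwards [h.eventually_dist_le_one ha hF hx,
    (h.tendsto_apply ha.le hF hx).eventually_lt_const (lt_add_of_pos_right _ hν)]
    with k hstep hFk hη
  have hanti : Antitone fun k => F (x k) := h.antitone ha.le
  rcases (h.le_apply_of_mapClusterPt ha.le hF hx (k + 1)).eq_or_lt with heq | hlt
  · calc F (x (k + 2)) - F xbar ≤ 0 := by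
          rw [heq]
          exact sub_nonpos.2 (hanti (Nat.le_succ (k + 1)))
      _ ≤ _ := by positivity
  · have hinf := h.infDist_le hG hγ0 hγ1 hc hEB hstep hη hlt
      ((hanti (Nat.le_succ k)).trans_lt hFk)
    calc F (x (k + 2)) - F xbar
        ≤ G / 2 * infDist (x (k + 1)) {u | F u ≤ F xbar} ^ 2 :=
          sub_le_iff_le_add'.2 (h.apply_le_add_infDist_sq ha.le hG (k + 1) xbar)
      _ ≤ G / 2 * ((c * G) ^ γ⁻¹ * dist (x k) (x (k + 1))) ^ 2 := by
          gcongr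
          exact infDist_nonneg
      _ = _ := by ring

theorem summable_dist_and_tendsto (h : IsBregmanProxSeq F Ψ Ψ' a G x) (ha : 0 < a)
    (hG : 0 ≤ G) {γ η ν c : ℝ} (hγ0 : 0 < γ) (hγ1 : γ ≤ 1) (hη : 0 < η) (hν : 0 < ν)
    (hc : 0 ≤ c) (hEB : LevelSubdiffErrorBound F xbar γ η ν c)
    (hF : LowerSemicontinuousAt F xbar) (hx : MapClusterPt xbar atTop x) :
    Summable (fun k => dist (x k) (x (k + 1))) ∧ Tendsto x atTop (𝓝 xbar) := by
  refine summable_dist_and_tendsto_of_sufficient_decrease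
    (v := fun k => F (x k) - F xbar) (A := G / 2 * ((c * G) ^ γ⁻¹) ^ 2) ha (by positivity) hη
    ?_ hx (fun k => ?_) (h.eventually_sub_le ha hG hγ0 hγ1 hν hc hEB hF hx)
  · simpa using (h.tendsto_apply ha.le hF hx).sub_const (F xbar)
  · linarith [h.sufficient_decrease k]

end IsBregmanProxSeq

end ProximalPoint

section ProximalGradient

variable {V : Type*} [NormedAddCommGroup V] [InnerProductSpace ℝ V] [CompleteSpace V]
  {f g : V → ℝ} {f' : V → V} {K : ℕ → V → ℝ} {K' : ℕ → V → V} {ε : ℕ → ℝ} {x : ℕ → V}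
  {L m M εlo εhi : ℝ}

theorem isBregmanProxSeq_of_mem_bregT (hf : ∀ y, HasGradientAt f (f' y) y)
    (hlip : ∀ y z, ‖f' y - f' z‖ ≤ L * ‖y - z‖) (hm : 0 ≤ m) (hM : 0 ≤ M)
    (hK : ∀ k y, HasGradientAt (K k) (K' k y) y)
    (hKstrong : ∀ k y z, K k y + ⟪K' k y, z - y⟫ + m / 2 * ‖z - y‖ ^ 2 ≤ K k z)
    (hKlip : ∀ k y z, ‖K' k y - K' k z‖ ≤ M * ‖y - z‖)
    (hεlo : 0 < εlo) (hε : ∀ k, ε k ∈ Icc εlo εhi)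
    (hx : ∀ k, x (k + 1) ∈ bregT f' g (K k) (K' k) (ε k) (x k)) :
    IsBregmanProxSeq (f + g) (fun k => (ε k)⁻¹ • K k - f) (fun k => (ε k)⁻¹ • K' k - f')
      ((εhi⁻¹ * m - L) / 2) (εlo⁻¹ * M + L) x := by
  have hε0 (k : ℕ) : 0 < ε k := hεlo.trans_le (hε k).1
  have hε_hi (k : ℕ) : εhi⁻¹ ≤ (ε k)⁻¹ := inv_anti₀ (hε0 k) (hε k).2
  have hinv (k : ℕ) : 0 ≤ (ε k)⁻¹ := (inv_pos.2 (hε0 k)).le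
  refine ⟨fun k => mem_bregT_iff_isMinOn.1 (hx k), fun k y z => ?_, fun k y z => ?_,
    fun k y z => ?_⟩
  · have hKD : m / 2 * ‖z - y‖ ^ 2 ≤ bregD (K k) (K' k) y z := by
      unfold bregD
      linarith [hKstrong k y z]
    have hscaled : εhi⁻¹ * (m / 2 * ‖z - y‖ ^ 2) ≤ (ε k)⁻¹ * bregD (K k) (K' k) y z :=
      mul_le_mul (hε_hi k) hKD (by positivity) (hinv k)
    rw [bregD_smul_sub]
    linarith [(abs_le.1 (abs_bregD_le hf hlip y z)).2]
  · have hKD : bregD (K k) (K' k) y z ≤ M / 2 * ‖z - y‖ ^ 2 :=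
      (abs_le.1 (abs_bregD_le (hK k) (hKlip k) y z)).2
    have hscaled : (ε k)⁻¹ * bregD (K k) (K' k) y z ≤ εlo⁻¹ * (M / 2 * ‖z - y‖ ^ 2) :=
      (mul_le_mul_of_nonneg_left hKD (hinv k)).trans (by gcongr; exact (hε k).1)
    rw [bregD_smul_sub]
    linarith [(abs_le.1 (abs_bregD_le hf hlip y z)).1]
  · calc ‖((ε k)⁻¹ • K' k - f') y - ((ε k)⁻¹ • K' k - f') z‖
        = ‖(ε k)⁻¹ • (K' k y - K' k z) - (f' y - f' z)‖ := by
          simp only [Pi.sub_apply, Pi.smul_apply, smul_sub]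
          congr 1
          abel
      _ ≤ (ε k)⁻¹ * ‖K' k y - K' k z‖ + ‖f' y - f' z‖ := by
          refine (norm_sub_le _ _).trans_eq ?_
          rw [norm_smul, Real.norm_of_nonneg (hinv k)]
      _ ≤ εlo⁻¹ * (M * ‖y - z‖) + L * ‖y - z‖ := by
          gcongr
          exacts [(hε k).1, hKlip k y z, hlip y z]
      _ = (εlo⁻¹ * M + L) * ‖y - z‖ := by ring

theorem stmt11_general {xbar : V} {γ η ν c : ℝ} (hL : 0 ≤ L)
    (hf : ∀ y, HasGradientAt f (f' y) y)
    (hlip : ∀ y z, ‖f' y - f' z‖ ≤ L * ‖y - z‖) (hg : LowerSemicontinuousAt g xbar)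
    (hM : 0 ≤ M) (hK : ∀ k y, HasGradientAt (K k) (K' k y) y)
    (hKstrong : ∀ k y z, K k y + ⟪K' k y, z - y⟫ + m / 2 * ‖z - y‖ ^ 2 ≤ K k z)
    (hKlip : ∀ k y z, ‖K' k y - K' k z‖ ≤ M * ‖y - z‖)
    (hεlo : 0 < εlo) (hεhi : εhi * L < m) (hε : ∀ k, ε k ∈ Icc εlo εhi)
    (hx : ∀ k, x (k + 1) ∈ bregT f' g (K k) (K' k) (ε k) (x k))
    (hxbar : MapClusterPt xbar atTop x)
    (hγ0 : 0 < γ) (hγ1 : γ ≤ 1) (hη : 0 < η) (hν : 0 < ν) (hc : 0 ≤ c)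
    (hEB : LevelSubdiffErrorBound (f + g) xbar γ η ν c) :
    Summable (fun k => ‖x (k + 1) - x k‖) ∧ Tendsto x atTop (𝓝 xbar) := by
  have hεhi0 : 0 < εhi := hεlo.trans_le ((hε 0).1.trans (hε 0).2)
  have hm : 0 ≤ m := (mul_nonneg hεhi0.le hL).trans hεhi.le
  have ha : 0 < (εhi⁻¹ * m - L) / 2 := half_pos (sub_pos.2 ((lt_inv_mul_iff₀ hεhi0).2 hεhi))
  have hF : LowerSemicontinuousAt (f + g) xbar :=
    (hf xbar).continuousAt.lowerSemicontinuousAt.add hg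
  simpa only [dist_eq_norm'] using
    (isBregmanProxSeq_of_mem_bregT hf hlip hm hM hK hKstrong hKlip hεlo hε
      hx).summable_dist_and_tendsto ha (by positivity) hγ0 hγ1 hη hν hc hEB hF hxbar

end ProximalGradient

/-- Finite length property of a VBPG sequence under a level-set subdifferential
error bound at an accumulation point, and convergence of the whole sequence. -/
theorem stmt11
    (f g : E → ℝ) (f' : E → E) (L : ℝ)
    (hL : 0 < L)
    (hf : ∀ x, HasGradientAt f (f' x) x)
    (hlip : ∀ x y, ‖f' x - f' y‖ ≤ L * ‖x - y‖)
    (hg : Continuous g)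
    (hlevel : ∀ r : ℝ, Bornology.IsBounded {x : E | f x + g x ≤ r})
    (Kk : ℕ → E → ℝ) (Kk' : ℕ → E → E) (mk Mk : ℕ → ℝ) (εk : ℕ → ℝ) (εlo εhi : ℝ)
    (x : ℕ → E) (m M : ℝ) (hm : 0 < m) (hmM : m ≤ M)
    (hmk : ∀ k, m ≤ mk k) (hMk : ∀ k, Mk k ≤ M)
    (hKk : ∀ k y, HasGradientAt (Kk k) (Kk' k y) y)
    (hKkstrong : ∀ k (y z : E), Kk k y + ⟪Kk' k y, z - y⟫ + mk k / 2 * ‖z - y‖ ^ 2 ≤ Kk k z)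
    (hKklip : ∀ k (y z : E), ‖Kk' k y - Kk' k z‖ ≤ Mk k * ‖y - z‖)
    (hεlo : 0 < εlo) (hεle : εlo ≤ εhi) (hεhi : εhi * L < m)
    (hεk : ∀ k, εk k ∈ Set.Icc εlo εhi)
    (hiter : ∀ k, x (k+1) ∈ bregT f' g (Kk k) (Kk' k) (εk k) (x k))
    (xbar : E) (φ : ℕ → ℕ) (hφ : StrictMono φ)
    (hacc : Tendsto (fun k => x (φ k)) atTop (nhds xbar))
    (γ η ν c₃ : ℝ)
    (hγ0 : 0 < γ) (hγ1 : γ ≤ 1) (hη0 : 0 < η) (hη2 : η ≤ 2) (hν : 0 < ν) (hc₃ : 0 < c₃)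
    (hEB : ∀ y : E, ‖y - xbar‖ < η → f xbar + g xbar < f y + g y →
      f y + g y < f xbar + g xbar + ν →
      ∀ ξ ∈ proxSubdiff (fun z => f z + g z) y,
        Metric.infDist y {z : E | f z + g z ≤ f xbar + g xbar} ^ γ ≤ c₃ * ‖ξ‖) :
    Summable (fun k => ‖x (k+1) - x k‖) ∧ Tendsto x atTop (nhds xbar) :=
  stmt11_general hL.le hf hlip (hg.lowerSemicontinuous xbar) (hm.le.trans hmM) hKk
    (fun k y z => le_trans (by gcongr; exact hmk k) (hKkstrong k y z))
    (fun k y z => (hKklip k y z).trans (by gcongr; exact hMk k)) hεlo hεhi hεk hiter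
    (hacc.mapClusterPt.of_comp hφ.tendsto_atTop) hγ0 hγ1 hη0 hν hc₃.le hEB
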